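/- Let A_1,…,A_T be unital *-subalgebras of the algebra M_D(ℂ) of D×D complex matrices such that: (i) they pairwise commute elementwise (XY = YX for all X ∈ A_j, Y ∈ A_k with j ≠ k); and (ii) they are complete (the subalgebra of M_D(ℂ) generated by ⋃_j A_j is all of M_D(ℂ)). Then each A_j has trivial center (the only elements of A_j that commute with every element of A_j are the scalar multiples of the identity), and there exist positive integers d_1,…,d_T with d_1 d_2 ⋯ d_T = D and a unitary U ∈ M_D(ℂ) such that, for each j, U A_j U† = { I_{d_1} ⊗ ⋯ ⊗ I_{d_{j−1}} ⊗ X ⊗ I_{d_{j+1}} ⊗ ⋯ ⊗ I_{d_T} : X ∈ M_{d_j}(ℂ) } (Kronecker products with arbitrary j-th factor and identity elsewhere). -/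

import Mathlib

open scoped BigOperators Matrix

namespace BV

open Classical in
/-- The matrix `X` on the `j`-th tensor factor, amplified by the identity on the others
(Kronecker product with arbitrary `j`-th factor and identities elsewhere). -/
noncomputable def factorMat {T : ℕ} (dv : Fin T → ℕ) (j : Fin T)
    (X : Matrix (Fin (dv j)) (Fin (dv j)) ℂ) :
    Matrix (∀ l, Fin (dv l)) (∀ l, Fin (dv l)) ℂ :=
  fun a b => if (∀ l, l ≠ j → a l = b l) then X (a j) (b j) else 0

theorem burnside_aux {R W : Type*} [Ring R] [Algebra ℂ R] [AddCommGroup W] [Module ℂ W]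
    [Module R W] [IsScalarTower ℂ R W] [IsSimpleModule R W] [FiniteDimensional ℂ W]
    (f : W →ₗ[ℂ] W) (s : Finset W) : ∃ r : R, ∀ w ∈ s, f w = r • w := by
  let g : Module.End (Module.End R W) W :=
    { toFun := f
      map_add' := f.map_add
      map_smul' := by
        intro m w
        obtain ⟨c, rfl⟩ :=
          (IsSimpleModule.algebraMap_end_bijective_of_isAlgClosed (A := R) (V := W) ℂ).2 m
        simp }
  exact jacobson_density g s

theorem exists_irred_abs {R E : Type*} [Ring R] [Algebra ℂ R] [AddCommGroup E] [Module ℂ E]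
    [FiniteDimensional ℂ E] [Nontrivial E] [Module R E] [IsScalarTower ℂ R E] :
    ∃ W : Submodule ℂ E, W ≠ ⊥ ∧ (∀ (r : R), ∀ w ∈ W, r • w ∈ W) ∧
      ∀ (f : W →ₗ[ℂ] W) (s : Finset W), ∃ r : R, ∀ w ∈ s, (f w : E) = r • (w : E) := by
  have : IsArtinian R E := isArtinian_of_tower ℂ inferInstance
  obtain ⟨W, hW, -⟩ := (eq_bot_or_exists_atom_le (⊤ : Submodule R E)).resolve_left top_ne_bot
  have : IsSimpleModule R W := isSimpleModule_iff_isAtom.2 hW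
  let W' : Submodule ℂ E := W.restrictScalars ℂ
  have : FiniteDimensional ℂ W := inferInstanceAs (FiniteDimensional ℂ W')
  have : IsScalarTower ℂ R W := ⟨fun c x v => Subtype.ext (smul_assoc c x (v : E))⟩
  refine ⟨W', ?_, fun r w hw => W.smul_mem r hw, fun f s => ?_⟩
  · intro h
    exact hW.1 (by simpa [W'] using h)
  · obtain ⟨r, hr⟩ := burnside_aux (R := R) (W := W)
      { toFun := f, map_add' := f.map_add, map_smul' := f.map_smul } s
    exact ⟨r, fun w hw => congrArg (Subtype.val) (hr w hw)⟩

theorem exists_irred_rho {R E : Type*} [Ring R] [Algebra ℂ R] [AddCommGroup E] [Module ℂ E]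
    [FiniteDimensional ℂ E] [Nontrivial E] (ρ : R →ₐ[ℂ] Module.End ℂ E) :
    ∃ W : Submodule ℂ E, W ≠ ⊥ ∧ (∀ (r : R), ∀ w ∈ W, ρ r w ∈ W) ∧
      ∀ (f : W →ₗ[ℂ] W) (s : Finset W), ∃ r : R, ∀ w ∈ s, (f w : E) = ρ r (w : E) := by
  let : Module R E := Module.compHom E ρ.toRingHom
  have hsm : ∀ (x : R) (v : E), x • v = ρ x v := fun _ _ => rfl
  have : IsScalarTower ℂ R E := ⟨fun c x v => by simp [hsm]⟩
  exact exists_irred_abs (R := R) (E := E)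

theorem inner_basis_sum {ι W : Type*} [Fintype ι] [NormedAddCommGroup W]
    [InnerProductSpace ℂ W] (b : OrthonormalBasis ι ℂ W) (y : ι → ℂ) (k : ι) :
    inner ℂ (b k) (∑ m, y m • b m) = y k := by
  classical
  simp [inner_sum, inner_smul_right, b.inner_eq_ite]

theorem exists_irred {D : ℕ} (hD : 0 < D)
    (A : StarSubalgebra ℂ (Matrix (Fin D) (Fin D) ℂ)) :
    ∃ d : ℕ, 0 < d ∧ ∃ V : Matrix (Fin D) (Fin d) ℂ, Vᴴ * V = 1 ∧
      (∀ x ∈ A, x * V = V * (Vᴴ * x * V)) ∧ ∀ Y, ∃ x ∈ A, Vᴴ * x * V = Y := by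
  let ρ : A →ₐ[ℂ] Module.End ℂ (EuclideanSpace ℂ (Fin D)) :=
    (Matrix.toLpLinAlgEquiv (R := ℂ) (n := Fin D) 2).toAlgHom.comp A.toSubalgebra.val
  have : Nonempty (Fin D) := ⟨⟨0, hD⟩⟩
  obtain ⟨W, hW, hinv, hsurj⟩ := exists_irred_rho ρ
  have : Nontrivial W := (Submodule.nontrivial_iff_ne_bot).2 hW
  let b := stdOrthonormalBasis ℂ W
  have hV : ∀ x : A, ∀ k, ∃ w : W, (w : EuclideanSpace ℂ (Fin D)) = ρ x (b k : EuclideanSpace ℂ (Fin D)) := fun x k =>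
    ⟨⟨ρ x (b k : EuclideanSpace ℂ (Fin D)), hinv x _ (b k).2⟩, rfl⟩
  let V : Matrix (Fin D) (Fin (Module.finrank ℂ W)) ℂ := Matrix.of fun i k => (b k : EuclideanSpace ℂ (Fin D)) i
  have hin : ∀ u : EuclideanSpace ℂ (Fin D), ∀ k, (Vᴴ *ᵥ u.ofLp) k = inner ℂ (b k : EuclideanSpace ℂ (Fin D)) u := by
    intro u k
    simp [Matrix.mulVec, dotProduct, V, PiLp.inner_apply, mul_comm]
  have hcol : ∀ x : A, ∀ k l, (Vᴴ * (x : Matrix (Fin D) (Fin D) ℂ) * V) k l =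
      inner ℂ (b k : EuclideanSpace ℂ (Fin D)) (ρ x (b l : EuclideanSpace ℂ (Fin D))) := by
    intro x k l
    rw [← hin, Matrix.mul_assoc]
    rfl
  refine ⟨Module.finrank ℂ W, Module.finrank_pos, V, ?_, ?_, ?_⟩
  · ext k l
    have h1 := hcol 1 k l
    simp only [OneMemClass.coe_one, Matrix.mul_one, map_one, Module.End.one_apply] at h1
    rw [h1, ← Submodule.coe_inner, b.inner_eq_ite, Matrix.one_apply]
  · intro x hx
    ext i l
    obtain ⟨w, hw⟩ := hV ⟨x, hx⟩ l
    have h1 := congrArg (fun u : W => (u : EuclideanSpace ℂ (Fin D)) i) (b.sum_repr' w)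
    rw [Matrix.mul_apply (M := V)]
    simp only [hcol ⟨x, hx⟩, ← hw, ← Submodule.coe_inner]
    have h2 : (x * V) i l = (w : EuclideanSpace ℂ (Fin D)) i := by rw [hw]; rfl
    rw [h2, ← h1]
    simp [V, mul_comm]
  · intro Y
    let f : W →ₗ[ℂ] W := Matrix.toLin b.toBasis b.toBasis Y
    obtain ⟨r, hr⟩ := hsurj f (Finset.univ.image fun k => b k)
    refine ⟨r, r.2, ?_⟩
    ext k l
    have h1 := hr (b l) (Finset.mem_image_of_mem _ (Finset.mem_univ l))
    have h2 : f (b l) = ∑ m, Y m l • b m := by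
      have := Matrix.toLin_self b.toBasis b.toBasis Y l
      simpa using this
    rw [hcol, ← h1, h2, ← Submodule.coe_inner]
    exact inner_basis_sum b (fun m => Y m l) k

theorem scalar_of_commute {D T : ℕ} 
    (A : Fin T → StarSubalgebra ℂ (Matrix (Fin D) (Fin D) ℂ))
    (hcomplete : Algebra.adjoin ℂ (⋃ j, (A j : Set (Matrix (Fin D) (Fin D) ℂ))) = ⊤)
    (X : Matrix (Fin D) (Fin D) ℂ) (hX : ∀ j, ∀ Y ∈ A j, X * Y = Y * X) :
    ∃ c : ℂ, X = c • (1 : Matrix (Fin D) (Fin D) ℂ) := by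
  have h : ∀ Y, Commute X Y := by
    intro Y
    have hY : Y ∈ Algebra.adjoin ℂ (⋃ j, (A j : Set (Matrix (Fin D) (Fin D) ℂ))) := by
      rw [hcomplete]; trivial
    induction hY using Algebra.adjoin_induction with
    | mem x hx =>
      obtain ⟨j, hj⟩ := Set.mem_iUnion.1 hx
      exact hX j x hj
    | algebraMap r => exact (Algebra.commutes r X).symm
    | add x y _ _ h1 h2 => exact h1.add_right h2
    | mul x y _ _ h1 h2 => exact h1.mul_right h2
  obtain ⟨c, hc⟩ := Matrix.mem_range_scalar_of_commute_single (M := X)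
    (fun i j _ => (h _).symm)
  exact ⟨c, by rw [← hc, Matrix.smul_one_eq_diagonal]; rfl⟩

theorem exists_hom {D T : ℕ} (hD : 0 < D)
    (A : Fin T → StarSubalgebra ℂ (Matrix (Fin D) (Fin D) ℂ))
    (hcomm : ∀ j k, j ≠ k → ∀ X ∈ A j, ∀ Y ∈ A k, X * Y = Y * X)
    (hcomplete : Algebra.adjoin ℂ (⋃ j, (A j : Set (Matrix (Fin D) (Fin D) ℂ))) = ⊤)
    (j : Fin T) :
    ∃ d : ℕ, 0 < d ∧ ∃ ψ : Matrix (Fin d) (Fin d) ℂ →⋆ₐ[ℂ] Matrix (Fin D) (Fin D) ℂ,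
      Set.range ψ = (A j : Set (Matrix (Fin D) (Fin D) ℂ)) := by
  obtain ⟨d, hd, V, hVV, hinv, hsurj⟩ := exists_irred hD (A j)
  refine ⟨d, hd, ?_⟩
  have hS : ∀ m n : Matrix (Fin D) (Fin D) ℂ, (∀ x ∈ A j, x * V = 0 → x * n * V = 0) →
      (∀ x ∈ A j, x * V = 0 → x * (m * n) * V = 0) := by
    intro m
    have hm : m ∈ Algebra.adjoin ℂ (⋃ j, (A j : Set (Matrix (Fin D) (Fin D) ℂ))) := by
      rw [hcomplete]; trivial
    induction hm using Algebra.adjoin_induction with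
    | mem g hg =>
      intro n hn x hx hxV
      obtain ⟨k, hk⟩ := Set.mem_iUnion.1 hg
      by_cases hjk : j = k
      · subst hjk
        rw [← mul_assoc]
        refine hn _ (mul_mem hx hk) ?_
        rw [Matrix.mul_assoc, hinv g hk, ← Matrix.mul_assoc, hxV, Matrix.zero_mul]
      · rw [← mul_assoc, hcomm j k hjk x hx g hk, mul_assoc g, Matrix.mul_assoc g, hn x hx hxV,
          Matrix.mul_zero]
    | algebraMap r =>
      intro n hn x hx hxV
      rw [← Algebra.smul_def, mul_smul_comm, Matrix.smul_mul, hn x hx hxV, smul_zero]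
    | add a b _ _ h1 h2 =>
      intro n hn x hx hxV
      rw [add_mul, mul_add, Matrix.add_mul, h1 n hn x hx hxV, h2 n hn x hx hxV, add_zero]
    | mul a b _ _ h1 h2 =>
      intro n hn
      rw [mul_assoc]
      exact h1 _ (h2 _ hn)
  have hinj : ∀ x ∈ A j, x * V = 0 → x = 0 := by
    intro x hx hxV
    have h1 : ∀ m : Matrix (Fin D) (Fin D) ℂ, x * m * V = 0 := by
      intro m
      have := hS m 1 (by intro x _ h; rwa [mul_one]) x hx hxV
      rwa [mul_one] at this
    have hne : ∃ p q, V p q ≠ 0 := by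
      by_contra! hne
      have hV0 : V = 0 := by ext p q; exact hne p q
      have := congrFun (congrFun hVV ⟨0, hd⟩) ⟨0, hd⟩
      simp [hV0] at this
    obtain ⟨p, q, hpq⟩ := hne
    ext i k
    have := congrFun (congrFun (h1 (Matrix.single k p 1)) i) q
    rw [Matrix.mul_assoc, Matrix.mul_apply] at this
    simp [Matrix.mul_apply, Matrix.single_apply, ite_and] at this
    exact this.resolve_right hpq
  let φ : A j →⋆ₐ[ℂ] Matrix (Fin d) (Fin d) ℂ :=
    { toFun := fun x => Vᴴ * (x : Matrix (Fin D) (Fin D) ℂ) * V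
      map_one' := by simp [hVV]
      map_zero' := by simp
      map_add' := by intro x y; simp [Matrix.mul_add, Matrix.add_mul]
      map_mul' := by
        intro x y
        simp only [MulMemClass.coe_mul, Matrix.mul_assoc]
        conv_lhs => rw [hinv y y.2]
        simp only [Matrix.mul_assoc]
      commutes' := by
        intro r
        simp [Algebra.algebraMap_eq_smul_one, hVV]
      map_star' := by
        intro x
        simp [Matrix.star_eq_conjTranspose, Matrix.conjTranspose_mul, Matrix.mul_assoc] }
  have hφ : Function.Bijective φ := by
    constructor
    · refine (injective_iff_map_eq_zero φ).2 ?_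
      intro x hx
      have hx' : Vᴴ * (x : Matrix (Fin D) (Fin D) ℂ) * V = 0 := hx
      apply Subtype.ext
      apply hinj x x.2
      rw [hinv x x.2, hx', Matrix.mul_zero]
    · intro Y
      obtain ⟨x, hx, h⟩ := hsurj Y
      exact ⟨⟨x, hx⟩, h⟩
  let e := StarAlgEquiv.ofBijective φ hφ
  refine ⟨(A j).subtype.comp (e.symm : _ →⋆ₐ[ℂ] _), ?_⟩
  ext x
  constructor
  · rintro ⟨y, rfl⟩
    exact (e.symm y).2
  · intro hx
    exact ⟨e ⟨x, hx⟩, by simp⟩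

theorem factorMat_conjTranspose {T : ℕ} (dv : Fin T → ℕ) (j : Fin T)
    (X : Matrix (Fin (dv j)) (Fin (dv j)) ℂ) :
    (factorMat dv j X)ᴴ = factorMat dv j Xᴴ := by
  ext a b
  simp only [Matrix.conjTranspose_apply, factorMat]
  have : (∀ l, l ≠ j → a l = b l) ↔ (∀ l, l ≠ j → b l = a l) :=
    ⟨fun h l hl => (h l hl).symm, fun h l hl => (h l hl).symm⟩
  by_cases h : ∀ l, l ≠ j → a l = b l
  · rw [if_pos h, if_pos (this.1 h)]
  · rw [if_neg h, if_neg (fun h' => h (this.2 h')), star_zero]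

theorem sum_factorMat {T : ℕ} (dv : Fin T → ℕ) (j : Fin T)
    (X : Matrix (Fin (dv j)) (Fin (dv j)) ℂ) (c : ∀ l, Fin (dv l)) (g : (∀ l, Fin (dv l)) → ℂ) :
    ∑ b, g b * factorMat dv j X b c = ∑ a, X a (c j) * g (Function.update c j a) := by
  symm
  refine Finset.sum_of_injOn (fun a => Function.update c j a) ?_ ?_ ?_ ?_
  · intro a _ b _ h
    exact Function.update_injective c j h
  · intro a _; simp
  · intro b _ hb
    rw [factorMat, if_neg, mul_zero]
    intro h
    apply hb
    refine ⟨b j, by simp, ?_⟩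
    ext l
    by_cases hl : l = j
    · subst hl; simp
    · simp [hl, h l hl]
  · intro a _
    rw [factorMat, if_pos, Function.update_self, mul_comm]
    intro l hl
    simp [hl]

theorem exists_fixed_vector {D T : ℕ} (hD : 0 < D) (dv : Fin T → ℕ) (z : ∀ j, Fin (dv j))
    (ψ : ∀ j, Matrix (Fin (dv j)) (Fin (dv j)) ℂ →⋆ₐ[ℂ] Matrix (Fin D) (Fin D) ℂ)
    (hψ : Pairwise fun i j => ∀ X Y, Commute (ψ i X) (ψ j Y)) :
    ∃ v : Fin D → ℂ, star v ⬝ᵥ v = 1 ∧ ∀ j, ψ j (Matrix.single (z j) (z j) 1) *ᵥ v = v := by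
  have key : ∀ s : Finset (Fin T), ∃ v : Fin D → ℂ, v ≠ 0 ∧
      ∀ j ∈ s, ψ j (Matrix.single (z j) (z j) 1) *ᵥ v = v := by
    intro s
    induction s using Finset.induction_on with
    | empty =>
      refine ⟨fun _ => 1, ?_, by simp⟩
      intro h
      exact one_ne_zero (congrFun h ⟨0, hD⟩)
    | insert j s hj ih =>
      obtain ⟨v, hv, hs⟩ := ih
      have h1 : ∃ a, ψ j (Matrix.single a a 1) *ᵥ v ≠ 0 := by
        by_contra! h
        apply hv
        have h2 : ∑ a, ψ j (Matrix.single a a 1) = 1 := by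
          rw [← map_sum, Matrix.sum_single_one, map_one]
        rw [← Matrix.one_mulVec v, ← h2, Matrix.sum_mulVec]
        exact Finset.sum_eq_zero fun a _ => h a
      obtain ⟨a, ha⟩ := h1
      refine ⟨ψ j (Matrix.single (z j) a 1) *ᵥ v, ?_, ?_⟩
      · intro h
        apply ha
        have h3 : ψ j (Matrix.single a a 1) =
            ψ j (Matrix.single a (z j) 1) * ψ j (Matrix.single (z j) a 1) := by
          rw [← map_mul]; simp
        rw [h3, ← Matrix.mulVec_mulVec, h, Matrix.mulVec_zero]
      · intro i hi
        rcases Finset.mem_insert.1 hi with rfl | his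
        · rw [Matrix.mulVec_mulVec, ← map_mul]; simp
        · have hij : i ≠ j := by rintro rfl; exact hj his
          rw [Matrix.mulVec_mulVec, (hψ hij _ _).eq, ← Matrix.mulVec_mulVec, hs i his]
  obtain ⟨v, hv, h⟩ := key Finset.univ
  let w : EuclideanSpace ℂ (Fin D) := WithLp.toLp 2 v
  have hw : w ≠ 0 := by
    intro h0
    apply hv
    exact congrArg WithLp.ofLp h0
  have hn : star v ⬝ᵥ v = ((‖w‖ : ℂ)) ^ 2 := by
    have := inner_self_eq_norm_sq_to_K (𝕜 := ℂ) w
    rw [EuclideanSpace.inner_eq_star_dotProduct] at this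
    rw [dotProduct_comm]
    exact this
  have hw' : (‖w‖ : ℂ) ≠ 0 := by simpa using hw
  refine ⟨(‖w‖ : ℂ)⁻¹ • v, ?_, ?_⟩
  · rw [star_smul, smul_dotProduct, dotProduct_smul, hn]
    simp
    field_simp
  · intro j
    rw [Matrix.mulVec_smul, h j (Finset.mem_univ j)]

theorem exists_frame {D T : ℕ} (hD : 0 < D) (dv : Fin T → ℕ) (z : ∀ j, Fin (dv j))
    (ψ : ∀ j, Matrix (Fin (dv j)) (Fin (dv j)) ℂ →⋆ₐ[ℂ] Matrix (Fin D) (Fin D) ℂ)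
    (hψ : Pairwise fun i j => ∀ X Y, Commute (ψ i X) (ψ j Y)) :
    ∃ V : Matrix (Fin D) (∀ l, Fin (dv l)) ℂ, Vᴴ * V = 1 ∧
      ∀ j X, ψ j X * V = V * factorMat dv j X := by
  obtain ⟨v, hv1, hv⟩ := exists_fixed_vector hD dv z ψ hψ
  let φ : ∀ j, Matrix (Fin (dv j)) (Fin (dv j)) ℂ →* Matrix (Fin D) (Fin D) ℂ :=
    fun j => MonoidHomClass.toMonoidHom (ψ j)
  have hφ : Pairwise fun i j => ∀ X Y, Commute (φ i X) (φ j Y) := hψ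
  let Φ : (∀ j, Matrix (Fin (dv j)) (Fin (dv j)) ℂ) →* Matrix (Fin D) (Fin D) ℂ :=
    MonoidHom.noncommPiCoprod φ hφ
  have hΦs : ∀ j X, Φ (Pi.mulSingle j X) = ψ j X := by
    intro j X
    have h := MonoidHom.noncommPiCoprod_mulSingle φ (hcomm := hφ) j X
    exact h
  have hstar : ∀ X, (Φ X)ᴴ = Φ (star X) := by
    let Φ' : (∀ j, Matrix (Fin (dv j)) (Fin (dv j)) ℂ) →* Matrix (Fin D) (Fin D) ℂ :=
      { toFun := fun X => star (Φ (star X))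
        map_one' := by simp
        map_mul' := by
          intro X Y
          rw [star_mul, map_mul, star_mul] }
    have : Φ' = Φ := by
      apply MonoidHom.pi_ext
      intro j X
      change star (Φ (star (Pi.mulSingle j X))) = _
      have h1 : star (Pi.mulSingle j X : ∀ j, Matrix (Fin (dv j)) (Fin (dv j)) ℂ) =
          Pi.mulSingle j (star X) := by
        ext1 l
        by_cases hl : l = j
        · subst hl; simp
        · simp [hl]
      rw [h1, hΦs, hΦs, map_star, star_star]
    intro X
    have h2 := DFunLike.congr_fun this (star X)
    change star (Φ (star (star X))) = _ at h2
    rwa [star_star] at h2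
  have hfix : Φ (fun j => Matrix.single (z j) (z j) 1) *ᵥ v = v := by
    change Finset.noncommProd _ _ _ *ᵥ v = v
    refine Finset.noncommProd_induction _ _ _ (fun M => M *ᵥ v = v) ?_ ?_ ?_
    · intro M N hM hN
      rw [← Matrix.mulVec_mulVec, hN, hM]
    · simp
    · intro j _
      exact hv j
  have hzero : ∀ X j, X j = 0 → Φ X = 0 := by
    intro X j h
    have : X = Pi.mulSingle j 0 * X := by
      ext1 l
      by_cases hl : l = j
      · subst hl; simp [h]
      · simp [hl]
    rw [this, map_mul, hΦs, map_zero, zero_mul]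
  have hupd : ∀ X j Y, Φ (Function.update X j Y) = Φ (Function.update X j 1) * ψ j Y := by
    intro X j Y
    rw [← hΦs, ← map_mul]
    congr 1
    ext1 l
    by_cases hl : l = j
    · subst hl; simp
    · simp [hl]
  let q : (∀ l, Fin (dv l)) → ∀ j, Matrix (Fin (dv j)) (Fin (dv j)) ℂ :=
    fun c j => Matrix.single (c j) (z j) 1
  let V : Matrix (Fin D) (∀ l, Fin (dv l)) ℂ := Matrix.of fun i c => (Φ (q c) *ᵥ v) i
  refine ⟨V, ?_, ?_⟩
  · ext c c'
    have h1 : (Vᴴ * V) c c' = star v ⬝ᵥ (Φ (star (q c) * q c') *ᵥ v) := by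
      rw [map_mul, ← hstar, ← Matrix.mulVec_mulVec, Matrix.dotProduct_mulVec,
        ← Matrix.star_mulVec]
      rfl
    rw [h1]
    by_cases h : c = c'
    · subst h
      have h2 : star (q c) * q c = fun j => Matrix.single (z j) (z j) 1 := by
        ext1 j
        simp [q, Matrix.star_eq_conjTranspose]
      rw [h2, hfix, hv1, Matrix.one_apply_eq]
    · obtain ⟨j, hj⟩ := Function.ne_iff.1 h
      rw [hzero _ j, Matrix.zero_mulVec, dotProduct_zero, Matrix.one_apply_ne h]
      simp [q, Matrix.star_eq_conjTranspose, hj]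
  · intro j X
    ext i c
    rw [Matrix.mul_apply (M := V), sum_factorMat dv j X c (fun b => V i b)]
    have h1 : (ψ j X * V) i c = ((ψ j X * Φ (q c)) *ᵥ v) i := by
      rw [← Matrix.mulVec_mulVec]; rfl
    have h2 : ψ j X * Φ (q c) = ∑ a, X a (c j) • Φ (q (Function.update c j a)) := by
      have h3 : ∀ Y : Matrix (Fin (dv j)) (Fin (dv j)) ℂ, Pi.mulSingle j Y * q c =
          Function.update (q c) j (Y * q c j) := by
        intro Y
        ext1 l
        by_cases hl : l = j
        · subst hl; simp
        · simp [hl]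
      have h4 : X * q c j = ∑ a, X a (c j) • Matrix.single a (z j) 1 := by
        ext a b
        simp [q, Matrix.mul_apply, Matrix.single_apply, Matrix.sum_apply, ite_and]
      have h5 : ∀ a, q (Function.update c j a) =
          Function.update (q c) j (Matrix.single a (z j) 1) := by
        intro a
        ext1 l
        by_cases hl : l = j
        · subst hl; simp [q]
        · simp [q, hl]
      rw [← hΦs, ← map_mul, h3, hupd, h4, map_sum, Finset.mul_sum]
      refine Finset.sum_congr rfl fun a _ => ?_
      rw [h5, hupd _ _ (Matrix.single a (z j) 1), map_smul, mul_smul_comm]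
    rw [h1, h2, Matrix.sum_mulVec, Finset.sum_apply]
    refine Finset.sum_congr rfl fun a _ => ?_
    rw [Matrix.smul_mulVec]
    rfl

/-- Proposition 7, algebraically induced factorization: a complete,
pairwise-commuting family of unital *-subalgebras of `M_D(ℂ)` consists of algebras with
trivial center, and there is a tensor factorization `ℂ^D ≅ ⊗ⱼ ℂ^{dⱼ}` together with a
unitary conjugation identifying each `Aⱼ` with the full matrix algebra of the `j`-th
tensor factor. -/
theorem factorization_of_complete_commuting_algebras {D T : ℕ} (hD : 0 < D)
    (A : Fin T → StarSubalgebra ℂ (Matrix (Fin D) (Fin D) ℂ))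
    (hcomm : ∀ j k, j ≠ k → ∀ X ∈ A j, ∀ Y ∈ A k, X * Y = Y * X)
    (hcomplete : Algebra.adjoin ℂ (⋃ j, (A j : Set (Matrix (Fin D) (Fin D) ℂ))) = ⊤) :
    (∀ j, ∀ X ∈ A j, (∀ Y ∈ A j, X * Y = Y * X) →
        ∃ c : ℂ, X = c • (1 : Matrix (Fin D) (Fin D) ℂ)) ∧
    ∃ dv : Fin T → ℕ, (∀ j, 0 < dv j) ∧ (∏ j, dv j) = D ∧
      ∃ (e : Fin D ≃ (∀ l, Fin (dv l))) (U : Matrix (Fin D) (Fin D) ℂ),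
        U ∈ Matrix.unitaryGroup (Fin D) ℂ ∧
        ∀ j, (fun X => U * X * Uᴴ) '' (A j : Set (Matrix (Fin D) (Fin D) ℂ)) =
          Set.range (fun X : Matrix (Fin (dv j)) (Fin (dv j)) ℂ =>
            Matrix.submatrix (factorMat dv j X) e e) := by
  constructor
  · intro j X hX h
    refine scalar_of_commute A hcomplete X fun k Y hY => ?_
    by_cases hjk : j = k
    · subst hjk; exact h Y hY
    · exact hcomm j k hjk X hX Y hY
  choose dv hdv ψ hψ using exists_hom hD A hcomm hcomplete
  have hmem : ∀ j X, ψ j X ∈ A j := by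
    intro j X
    have : ψ j X ∈ (A j : Set _) := by rw [← hψ j]; exact ⟨X, rfl⟩
    exact this
  obtain ⟨V, hV, hVX⟩ := exists_frame hD dv (fun j => ⟨0, hdv j⟩) ψ
    (fun i j hij X Y => hcomm i j hij _ (hmem i X) _ (hmem j Y))
  have hVX' : ∀ j X, Vᴴ * ψ j X = factorMat dv j X * Vᴴ := by
    intro j X
    have h := congrArg Matrix.conjTranspose (hVX j Xᴴ)
    rw [Matrix.conjTranspose_mul, Matrix.conjTranspose_mul, factorMat_conjTranspose,
      Matrix.conjTranspose_conjTranspose, ← Matrix.star_eq_conjTranspose (ψ j Xᴴ), ← map_star,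
      Matrix.star_eq_conjTranspose, Matrix.conjTranspose_conjTranspose] at h
    exact h
  have hV' : V * Vᴴ = 1 := by
    obtain ⟨c, hc⟩ := scalar_of_commute A hcomplete (V * Vᴴ) (by
      intro j Y hY
      have hY' : Y ∈ Set.range (ψ j) := by rw [hψ j]; exact hY
      obtain ⟨X, rfl⟩ := hY'
      rw [Matrix.mul_assoc, hVX', ← Matrix.mul_assoc, ← Matrix.mul_assoc, hVX])
    have h1 : c • V = V := by
      have : V * Vᴴ * V = V := by rw [Matrix.mul_assoc, hV, Matrix.mul_one]
      rwa [hc, Matrix.smul_mul, Matrix.one_mul] at this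
    have h2 : c • (1 : Matrix (∀ l, Fin (dv l)) (∀ l, Fin (dv l)) ℂ) = 1 := by
      rw [← hV, ← Matrix.mul_smul, h1]
    have h3 := congrFun (congrFun h2 (fun j => ⟨0, hdv j⟩)) (fun j => ⟨0, hdv j⟩)
    have h4 : c = 1 := by simpa using h3
    rw [hc, h4, one_smul]
  have hcard : (∏ j, dv j) = D := by
    have h := Matrix.trace_mul_comm V Vᴴ
    rw [hV, hV', Matrix.trace_one, Matrix.trace_one] at h
    simp only [Fintype.card_pi, Fintype.card_fin] at h
    exact_mod_cast h.symm
  refine ⟨dv, hdv, hcard, ?_⟩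
  have e : Fin D ≃ (∀ l, Fin (dv l)) := Fintype.equivOfCardEq (by
    simp only [Fintype.card_pi, Fintype.card_fin]; exact hcard.symm)
  refine ⟨e, Vᴴ.submatrix e id, ?_, ?_⟩
  · rw [Matrix.mem_unitaryGroup_iff, Matrix.star_eq_conjTranspose, Matrix.conjTranspose_submatrix,
      Matrix.conjTranspose_conjTranspose,
      ← Matrix.submatrix_mul _ _ _ _ _ Function.bijective_id, hV,
      Matrix.submatrix_one_equiv]
  · intro j
    have key : ∀ X, Vᴴ.submatrix e id * ψ j X * (Vᴴ.submatrix e id)ᴴ =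
        Matrix.submatrix (factorMat dv j X) e e := by
      intro X
      have h : Vᴴ * ψ j X * V = factorMat dv j X := by
        rw [hVX', Matrix.mul_assoc, hV, Matrix.mul_one]
      rw [← h]
      ext a b
      simp [Matrix.mul_apply]
    rw [← hψ j, ← Set.range_comp]
    congr 1
    funext X
    exact key X

end BV
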